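/- Let N, m ∈ ℕ with 1 ≤ m < N, let 0 < p ≤ 1 and p < q ≤ ∞. Then the Gelfand m-width of the ℓ^p quasi-norm unit ball B^p_N in ℓ^q_N satisfies d^m(B^p_N, ℓ^q_N) ≥ (1/2)^{2/p − 1/q} · ( min{ 1, (2p/log(3^8·e)) · log(e·N/m) / m } )^{1/p − 1/q}. -/

import Mathlib

open Finset
open scoped ENNReal

noncomputable section

/-- The weighted `ℓ^p` (quasi-)norm on `ℝ^N` with positive weights `w` and exponent
`p ∈ (0,∞]`: `‖x‖_{p,w} = (∑ i, (|x i| / w i)^p)^(1/p)` for `p < ∞`, and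
`sup_i |x i| / w i` for `p = ∞`. -/
def wnorm {N : ℕ} (p : ℝ≥0∞) (w : Fin N → ℝ) (x : Fin N → ℝ) : ℝ :=
  if p = ⊤ then ⨆ i, |x i| / w i
  else (∑ i, (|x i| / w i) ^ p.toReal) ^ (1 / p.toReal)

/-- The weighted `ℓ^p` unit ball `B^p_N(w)` in `ℝ^N`. -/
def wball {N : ℕ} (p : ℝ≥0∞) (w : Fin N → ℝ) : Set (Fin N → ℝ) :=
  {x | wnorm p w x ≤ 1}

/-- The Kolmogorov `m`-width of a subset `K` of `ℝ^N` equipped with the norm `nrm`. -/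
def kolWidth {N : ℕ} (m : ℕ) (K : Set (Fin N → ℝ)) (nrm : (Fin N → ℝ) → ℝ) : ℝ :=
  sInf { r | ∃ X : Submodule ℝ (Fin N → ℝ), Module.finrank ℝ X ≤ m ∧
    r = ⨆ x : K, ⨅ z : X, nrm ((x : Fin N → ℝ) - (z : Fin N → ℝ)) }

/-- The Gelfand `m`-width of a subset `K` of `ℝ^N` equipped with the norm `nrm`:
the infimum over linear maps `A : ℝ^N → ℝ^m` of `sup { nrm x : x ∈ K ∩ ker A }`
(equivalently, the infimum over subspaces of codimension at most `m`). -/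
def gelWidth {N : ℕ} (m : ℕ) (K : Set (Fin N → ℝ)) (nrm : (Fin N → ℝ) → ℝ) : ℝ :=
  sInf { r | ∃ A : (Fin N → ℝ) →ₗ[ℝ] (Fin m → ℝ),
    r = ⨆ x : (K ∩ (LinearMap.ker A : Set (Fin N → ℝ)) : Set (Fin N → ℝ)),
          nrm (x : Fin N → ℝ) }

/-- `C(s, k) / C(n, k) ≤ (s / n) ^ k`, without divisions. -/
lemma choose_mul_pow_le_pow_mul_choose {s n : ℕ} (h : s ≤ n) (k : ℕ) :
    s.choose k * n ^ k ≤ s ^ k * n.choose k := by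
  have key : s.descFactorial k * n ^ k ≤ s ^ k * n.descFactorial k := by
    induction k with
    | zero => simp
    | succ k ih =>
      have h1 : (s - k) * n ≤ s * (n - k) := by
        rw [Nat.sub_mul, Nat.mul_sub]
        have : s * k ≤ k * n := by rw [mul_comm s k]; exact Nat.mul_le_mul_left k h
        omega
      calc s.descFactorial (k + 1) * n ^ (k + 1)
          = ((s - k) * n) * (s.descFactorial k * n ^ k) := by
            rw [Nat.descFactorial_succ]; ring
        _ ≤ (s * (n - k)) * (s ^ k * n.descFactorial k) := Nat.mul_le_mul h1 ih
        _ = s ^ (k + 1) * n.descFactorial (k + 1) := by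
            rw [Nat.descFactorial_succ]; ring
  rw [Nat.descFactorial_eq_factorial_mul_choose, Nat.descFactorial_eq_factorial_mul_choose] at key
  refine Nat.le_of_mul_le_mul_left ?_ (Nat.factorial_pos k)
  linarith

/-- There are large families of `s`-subsets with pairwise intersections of size less than `k`. -/
lemma exists_finset_small_inter {α : Type*} [Fintype α] [DecidableEq α] {s k : ℕ} (hks : k ≤ s)
    (hs : s ≤ Fintype.card α) :
    ∃ F : Finset (Finset α), (∀ S ∈ F, #S = s) ∧
      (∀ S ∈ F, ∀ T ∈ F, S ≠ T → #(S ∩ T) < k) ∧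
      Fintype.card α ^ k ≤ s ^ k * (#F * 2 ^ s) := by
  classical
  let P : Finset (Finset (Finset α)) := {F | (∀ S ∈ F, #S = s) ∧
      (∀ S ∈ F, ∀ T ∈ F, S ≠ T → #(S ∩ T) < k)}
  obtain ⟨F, hF, hmax⟩ := P.exists_max_image (fun F => #F) ⟨∅, by simp [P]⟩
  obtain ⟨hFs, hFk⟩ := (Finset.mem_filter.1 hF).2
  refine ⟨F, hFs, hFk, ?_⟩
  have hcover : ∀ T : Finset α, #T = s → ∃ S ∈ F, k ≤ #(S ∩ T) := by
    intro T hT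
    by_contra! hcon
    have hTF : T ∉ F := fun hTF => by
      have := hcon T hTF
      rw [Finset.inter_self] at this
      omega
    have hins : insert T F ∈ P := by
      refine Finset.mem_filter.2 ⟨Finset.mem_univ _, ?_, ?_⟩
      · intro S hS
        rcases Finset.mem_insert.1 hS with rfl | hS
        exacts [hT, hFs S hS]
      · intro S hS S' hS' hne
        rcases Finset.mem_insert.1 hS with h1 | h1 <;>
          rcases Finset.mem_insert.1 hS' with h2 | h2
        · exact absurd (h1.trans h2.symm) hne
        · rw [h1, Finset.inter_comm]; exact hcon _ h2
        · rw [h2]; exact hcon _ h1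
        · exact hFk _ h1 _ h2 hne
    have := hmax _ hins
    rw [Finset.card_insert_of_notMem hTF] at this
    omega
  set n := Fintype.card α with hn
  have hcount : n.choose s ≤ #F * (s.choose k * (n - k).choose (s - k)) := by
    have hsub : Finset.powersetCard s (Finset.univ : Finset α) ⊆
        F.biUnion (fun S => (Finset.powersetCard k S).biUnion
          (fun U => (Finset.powersetCard (s - k) Uᶜ).image (fun W => U ∪ W))) := by
      intro T hT
      have hT := (Finset.mem_powersetCard.1 hT).2
      obtain ⟨S, hS, hST⟩ := hcover T hT
      obtain ⟨U, hU, hUk⟩ := Finset.exists_subset_card_eq hST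
      have hUT : U ⊆ T := hU.trans Finset.inter_subset_right
      simp only [Finset.mem_biUnion, Finset.mem_image, Finset.mem_powersetCard]
      refine ⟨S, hS, U, ⟨hU.trans Finset.inter_subset_left, hUk⟩, T \ U, ⟨?_, ?_⟩,
        Finset.union_sdiff_of_subset hUT⟩
      · intro i hi
        simpa using (Finset.mem_sdiff.1 hi).2
      · rw [Finset.card_sdiff_of_subset hUT, hT, hUk]
    calc n.choose s = #(Finset.powersetCard s (Finset.univ : Finset α)) := by
          rw [Finset.card_powersetCard, Finset.card_univ]
      _ ≤ _ := Finset.card_le_card hsub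
      _ ≤ _ := by
        refine Finset.card_biUnion_le_card_mul _ _ _ fun S hS => ?_
        have h2 := Finset.card_biUnion_le_card_mul (Finset.powersetCard k S)
          (fun U => (Finset.powersetCard (s - k) Uᶜ).image (fun W => U ∪ W))
          ((n - k).choose (s - k)) (fun U hU => ?_)
        · rwa [Finset.card_powersetCard, hFs S hS] at h2
        · refine Finset.card_image_le.trans ?_
          rw [Finset.card_powersetCard, Finset.card_compl, (Finset.mem_powersetCard.1 hU).2]
  have hmul := Nat.choose_mul (n := n) hks
  have hpos : 0 < n.choose s := Nat.choose_pos hs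
  have hpos' : 0 < s.choose k := Nat.choose_pos hks
  have h3 : n.choose k ≤ #F * (s.choose k * s.choose k) := by
    refine Nat.le_of_mul_le_mul_left ?_ hpos
    calc n.choose s * n.choose k
        ≤ (#F * (s.choose k * (n - k).choose (s - k))) * n.choose k :=
          Nat.mul_le_mul_right _ hcount
      _ = #F * s.choose k * (n.choose k * (n - k).choose (s - k)) := by ring
      _ = n.choose s * (#F * (s.choose k * s.choose k)) := by rw [← hmul]; ring
  refine Nat.le_of_mul_le_mul_left ?_ hpos'
  calc s.choose k * n ^ k ≤ s ^ k * n.choose k := choose_mul_pow_le_pow_mul_choose hs k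
    _ ≤ s ^ k * (#F * (s.choose k * 2 ^ s)) := by
      gcongr
      exact h3.trans (by gcongr; exact Nat.choose_le_two_pow s k)
    _ = _ := by ring

lemma half_mul_log_le_log_card {s n k c : ℕ} (hs : 0 < s) (hsn : s ≤ n) (hk : s ≤ 2 * k)
    (h : n ^ k ≤ s ^ k * (c * 2 ^ s)) :
    (s / 2 : ℝ) * Real.log (n / (4 * s)) ≤ Real.log c := by
  have hn : 0 < n := hs.trans_le hsn
  have hc : 0 < c := by
    rcases Nat.eq_zero_or_pos c with rfl | hc
    · have := pow_pos hn k
      simp at h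
      omega
    · exact hc
  have hsR : (0 : ℝ) < s := by exact_mod_cast hs
  have hnR : (0 : ℝ) < n := by exact_mod_cast hn
  have hcR : (0 : ℝ) < c := by exact_mod_cast hc
  have h' : (n : ℝ) ^ k ≤ s ^ k * (c * 2 ^ s) := by exact_mod_cast h
  have hlog := Real.log_le_log (by positivity) h'
  rw [Real.log_mul (by positivity) (by positivity), Real.log_mul (by positivity) (by positivity),
    Real.log_pow, Real.log_pow, Real.log_pow] at hlog
  have h4 : Real.log 4 = 2 * Real.log 2 := by
    rw [show (4 : ℝ) = 2 ^ 2 by norm_num, Real.log_pow]; norm_num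
  rw [Real.log_div (by positivity) (by positivity), Real.log_mul (by norm_num) (by positivity), h4]
  have hmono : Real.log s ≤ Real.log n := Real.log_le_log hsR (by exact_mod_cast hsn)
  have hkR : (s : ℝ) ≤ 2 * k := by exact_mod_cast hk
  nlinarith [mul_nonneg (sub_nonneg.2 hmono) (sub_nonneg.2 hkR)]

/-- The `p`-th power of the `ℓ^p` quasi-norm. -/
def powSum {N : ℕ} (p : ℝ) (x : Fin N → ℝ) : ℝ := ∑ i, |x i| ^ p

lemma powSum_nonneg {N : ℕ} (p : ℝ) (x : Fin N → ℝ) : 0 ≤ powSum p x :=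
  Finset.sum_nonneg fun _ _ => by positivity

lemma abs_add_rpow_le {p : ℝ} (hp0 : 0 ≤ p) (hp1 : p ≤ 1) (a b : ℝ) :
    |a + b| ^ p ≤ |a| ^ p + |b| ^ p :=
  (Real.rpow_le_rpow (abs_nonneg _) (abs_add_le a b) hp0).trans
    (Real.rpow_add_le_add_rpow (abs_nonneg a) (abs_nonneg b) hp0 hp1)

lemma powSum_add_le {N : ℕ} {p : ℝ} (hp0 : 0 ≤ p) (hp1 : p ≤ 1) (x y : Fin N → ℝ) :
    powSum p (x + y) ≤ powSum p x + powSum p y := by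
  unfold powSum
  rw [← Finset.sum_add_distrib]
  exact Finset.sum_le_sum fun i _ => abs_add_rpow_le hp0 hp1 _ _

lemma powSum_neg {N : ℕ} (p : ℝ) (x : Fin N → ℝ) : powSum p (-x) = powSum p x := by
  simp [powSum]

lemma powSum_smul {N : ℕ} (p c : ℝ) (x : Fin N → ℝ) :
    powSum p (c • x) = |c| ^ p * powSum p x := by
  unfold powSum
  rw [Finset.mul_sum]
  refine Finset.sum_congr rfl fun i _ => ?_
  rw [Pi.smul_apply, smul_eq_mul, abs_mul, Real.mul_rpow (abs_nonneg _) (abs_nonneg _)]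

lemma continuous_powSum {N : ℕ} {p : ℝ} (hp0 : 0 ≤ p) :
    Continuous (powSum p : (Fin N → ℝ) → ℝ) :=
  continuous_finsetSum _ fun i _ => (continuous_apply i).abs.rpow_const fun _ => Or.inr hp0

lemma powSum_pos {N : ℕ} {p : ℝ} {x : Fin N → ℝ} (hx : x ≠ 0) : 0 < powSum p x := by
  obtain ⟨i, hi⟩ := Function.ne_iff.1 hx
  exact Finset.sum_pos' (fun _ _ => by positivity)
    ⟨i, Finset.mem_univ i, Real.rpow_pos_of_pos (abs_pos.2 hi) p⟩

lemma abs_le_powSum_rpow {N : ℕ} {p : ℝ} (hp0 : 0 < p) (x : Fin N → ℝ) (i : Fin N) :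
    |x i| ≤ powSum p x ^ (1 / p) := by
  have h : |x i| ^ p ≤ powSum p x :=
    Finset.single_le_sum (f := fun i => |x i| ^ p) (fun _ _ => by positivity) (Finset.mem_univ i)
  rw [one_div, Real.le_rpow_inv_iff_of_pos (abs_nonneg _) (powSum_nonneg p x) hp0]
  exact h

open MeasureTheory Pointwise in
/-- Volumetric bound for families which are separated in the quotient of `ℓ^p` by a kernel. -/
lemma card_le_of_separated {N : ℕ} {E ι : Type*} [NormedAddCommGroup E] [NormedSpace ℝ E]
    [FiniteDimensional ℝ E] (A : (Fin N → ℝ) →ₗ[ℝ] E) (hA : Function.Surjective A)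
    {p : ℝ} (hp0 : 0 < p) (hp1 : p ≤ 1) (F : Finset ι) (x : ι → Fin N → ℝ) {r : ℝ} (hr : 0 < r)
    (hx : ∀ i ∈ F, powSum p (x i) ≤ r)
    (hsep : ∀ i ∈ F, ∀ j ∈ F, i ≠ j → ∀ v ∈ LinearMap.ker A, r ≤ powSum p (x i - x j + v)) :
    (#F : ℝ) ≤ (3 : ℝ) ^ (Module.finrank ℝ E / p) := by
  borelize E
  let μ : Measure E := Measure.addHaar
  let B : ℝ → Set (Fin N → ℝ) := fun t => {y | powSum p y < t}
  have hBopen : ∀ t, IsOpen (B t) := fun t => isOpen_lt (continuous_powSum hp0.le) continuous_const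
  have hAopen : IsOpenMap A := A.isOpenMap_of_finiteDimensional hA
  have hAcont : Continuous A := A.continuous_of_finiteDimensional
  have hzero : (0 : Fin N → ℝ) ∈ B (r / 2) := by
    have : powSum p (0 : Fin N → ℝ) = 0 := by simp [powSum, Real.zero_rpow hp0.ne']
    show powSum p (0 : Fin N → ℝ) < r / 2
    rw [this]; positivity
  set V := μ (A '' B (r / 2)) with hV
  have hVpos : V ≠ 0 := ((hAopen _ (hBopen _)).measure_pos μ ⟨A 0, 0, hzero, rfl⟩).ne'
  have hVtop : V ≠ ⊤ := by
    have hsub : B (r / 2) ⊆ Metric.closedBall 0 ((r / 2) ^ (1 / p)) := by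
      intro y hy
      rw [mem_closedBall_zero_iff, pi_norm_le_iff_of_nonneg (by positivity)]
      intro i
      exact (abs_le_powSum_rpow hp0 y i).trans
        (Real.rpow_le_rpow (powSum_nonneg p y) (le_of_lt hy) (by positivity))
    have hcomp := (isCompact_closedBall (0 : Fin N → ℝ) ((r / 2) ^ (1 / p))).image hAcont
    exact ((measure_mono (Set.image_mono hsub)).trans_lt hcomp.measure_lt_top).ne
  have hscale : B (r / 2 * 3) = (3 : ℝ) ^ (1 / p) • B (r / 2) := by
    ext y
    have h3 : (0 : ℝ) < (3 : ℝ) ^ (1 / p) := by positivity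
    rw [Set.mem_smul_set_iff_inv_smul_mem₀ h3.ne']
    show powSum p y < _ ↔ powSum p _ < _
    rw [powSum_smul, abs_of_pos (inv_pos.2 h3), Real.inv_rpow h3.le, ← Real.rpow_mul (by norm_num),
      one_div_mul_cancel hp0.ne', Real.rpow_one, inv_mul_lt_iff₀ (by norm_num), mul_comm]
  have hvol : μ (A '' B (r / 2 * 3)) = ENNReal.ofReal ((3 : ℝ) ^ (Module.finrank ℝ E / p)) * V := by
    rw [hscale, image_smul_set, Measure.addHaar_smul, abs_of_pos (by positivity),
      ← Real.rpow_natCast, ← Real.rpow_mul (by norm_num)]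
    congr 3
    ring
  have hdisj : (F : Set ι).PairwiseDisjoint fun i => (fun e => -A (x i) + e) ⁻¹' (A '' B (r / 2)) := by
    intro i hi j hj hij
    rw [Function.onFun, Set.disjoint_left]
    rintro e ⟨b, hb, hbe⟩ ⟨b', hb', hbe'⟩
    have hker : (b' - b) - (x i - x j) ∈ LinearMap.ker A := by
      rw [LinearMap.mem_ker]
      simp only [map_sub, hbe, hbe']
      abel
    have h1 := hsep i hi j hj hij _ hker
    have h2 : x i - x j + (b' - b - (x i - x j)) = b' + -b := by abel
    rw [h2] at h1
    have h3 := powSum_add_le hp0.le hp1 b' (-b)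
    rw [powSum_neg] at h3
    have hb : powSum p b < r / 2 := hb
    have hb' : powSum p b' < r / 2 := hb'
    linarith
  have hmeas : ∀ i ∈ F, MeasurableSet ((fun e => -A (x i) + e) ⁻¹' (A '' B (r / 2))) := fun i _ =>
    ((hAopen _ (hBopen _)).preimage (continuous_const.add continuous_id)).measurableSet
  have hsub : (⋃ i ∈ F, (fun e => -A (x i) + e) ⁻¹' (A '' B (r / 2))) ⊆ A '' B (r / 2 * 3) := by
    refine Set.iUnion₂_subset fun i hi e => ?_
    rintro ⟨b, hb, hbe⟩
    refine ⟨x i + b, ?_, by simp [hbe]⟩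
    have hb : powSum p b < r / 2 := hb
    have := powSum_add_le hp0.le hp1 (x i) b
    have := hx i hi
    show powSum p (x i + b) < r / 2 * 3
    linarith
  have hle := measure_mono (μ := μ) hsub
  rw [measure_biUnion_finset hdisj hmeas, hvol] at hle
  simp only [measure_preimage_add, Finset.sum_const, nsmul_eq_mul] at hle
  have hle' := (ENNReal.mul_le_mul_iff_left hVpos hVtop).1 hle
  rw [← ENNReal.ofReal_natCast] at hle'
  exact (ENNReal.ofReal_le_ofReal_iff (by positivity)).1 hle'

lemma exists_ne_zero_mem_ker_supported {N m : ℕ} (A : (Fin N → ℝ) →ₗ[ℝ] (Fin m → ℝ))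
    (U : Finset (Fin N)) (hU : m < #U) :
    ∃ v ∈ LinearMap.ker A, v ≠ 0 ∧ ∀ i ∉ U, v i = 0 := by
  let f := A.prod (LinearMap.funLeft ℝ ℝ (Subtype.val : {i // i ∉ U} → Fin N))
  have hker : LinearMap.ker f ≠ ⊥ := by
    apply LinearMap.ker_ne_bot_of_finrank_lt
    rw [Module.finrank_prod, Module.finrank_fin_fun, Module.finrank_fintype_fun_eq_card,
      Module.finrank_fin_fun, Fintype.card_subtype_compl, Fintype.card_fin, Fintype.card_coe]
    have := Finset.card_le_univ U
    rw [Fintype.card_fin] at this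
    omega
  obtain ⟨v, hv, hv0⟩ := Submodule.exists_mem_ne_zero_of_ne_bot hker
  have hv : f v = 0 := hv
  refine ⟨v, congrArg Prod.fst hv, hv0, fun i hi => ?_⟩
  exact congrFun (congrArg Prod.snd hv) ⟨i, hi⟩

/-- The null space property of order `t` for a subspace `K`, in `ℓ^p`. -/
def NullSpaceProperty {N : ℕ} (p : ℝ) (t : ℕ) (K : Submodule ℝ (Fin N → ℝ)) : Prop :=
  ∀ v ∈ K, v ≠ 0 → ∀ S : Finset (Fin N), #S ≤ t → ∑ i ∈ S, |v i| ^ p < powSum p v / 2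

lemma NullSpaceProperty.two_mul_le {N m t : ℕ} {p : ℝ} (hp0 : 0 < p) (hmN : m < N)
    {A : (Fin N → ℝ) →ₗ[ℝ] (Fin m → ℝ)} (h : NullSpaceProperty p t (LinearMap.ker A)) :
    2 * t ≤ m := by
  by_contra! hlt
  obtain ⟨U, -, hU⟩ := Finset.exists_subset_card_eq
    (s := (Finset.univ : Finset (Fin N))) (n := m + 1) (by simpa using hmN)
  obtain ⟨v, hv, hv0, hsupp⟩ := exists_ne_zero_mem_ker_supported A U (by omega)
  obtain ⟨S, hSU, hS⟩ := Finset.exists_subset_card_eq (s := U) (n := min t (m + 1))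
    (hU ▸ min_le_right _ _)
  have h1 := h v hv hv0 S (hS ▸ min_le_left _ _)
  have h2 := h v hv hv0 (U \ S) (by rw [Finset.card_sdiff_of_subset hSU]; omega)
  have h3 : ∑ i ∈ U, |v i| ^ p = powSum p v :=
    Finset.sum_subset (Finset.subset_univ U) fun i _ hi => by
      rw [hsupp i hi, abs_zero, Real.zero_rpow hp0.ne']
  have h4 := Finset.sum_sdiff (f := fun i => |v i| ^ p) hSU
  linarith

lemma NullSpaceProperty.powSum_le {N t : ℕ} {p : ℝ} (hp0 : 0 < p) (hp1 : p ≤ 1)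
    {K : Submodule ℝ (Fin N → ℝ)} (h : NullSpaceProperty p t K) {S : Finset (Fin N)} (hS : #S ≤ t)
    {x : Fin N → ℝ} (hx : ∀ i ∉ S, x i = 0) {v : Fin N → ℝ} (hv : v ∈ K) :
    powSum p x ≤ powSum p (x + v) := by
  rcases eq_or_ne v 0 with rfl | hv0
  · simp
  have h1 := h v hv hv0 S hS
  have hx' : ∑ i ∈ S, |x i| ^ p = powSum p x :=
    Finset.sum_subset (Finset.subset_univ S) fun i _ hi => by
      rw [hx i hi, abs_zero, Real.zero_rpow hp0.ne']
  have h2 : ∑ i ∈ Sᶜ, |(x + v) i| ^ p = ∑ i ∈ Sᶜ, |v i| ^ p :=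
    Finset.sum_congr rfl fun i hi => by
      rw [Pi.add_apply, hx i (Finset.mem_compl.1 hi), zero_add]
  have h3 : ∑ i ∈ S, |x i| ^ p ≤ ∑ i ∈ S, |(x + v) i| ^ p + ∑ i ∈ S, |v i| ^ p := by
    rw [← Finset.sum_add_distrib]
    refine Finset.sum_le_sum fun i _ => ?_
    have := abs_add_rpow_le hp0.le hp1 ((x + v) i) (-v i)
    rwa [Pi.add_apply, add_neg_cancel_right, abs_neg] at this
  have h4 := Finset.sum_add_sum_compl S fun i => |(x + v) i| ^ p
  have h5 := Finset.sum_add_sum_compl S fun i => |v i| ^ p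
  simp only [powSum] at *
  linarith

/-- The indicator vector of a set of coordinates. -/
def indVec {N : ℕ} (S : Finset (Fin N)) : Fin N → ℝ := fun i => if i ∈ S then 1 else 0

lemma powSum_indVec {N : ℕ} {p : ℝ} (hp0 : 0 < p) (S : Finset (Fin N)) :
    powSum p (indVec S) = #S := by
  have h : ∀ i, |indVec S i| ^ p = if i ∈ S then 1 else 0 := fun i => by
    unfold indVec
    split_ifs <;> simp [Real.zero_rpow hp0.ne']
  simp [powSum, h]

lemma powSum_indVec_sub {N : ℕ} {p : ℝ} (hp0 : 0 < p) (S T : Finset (Fin N)) :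
    powSum p (indVec S - indVec T) = #(S \ T) + #(T \ S) := by
  rw [← powSum_indVec hp0, ← powSum_indVec hp0, powSum, powSum, powSum, ← Finset.sum_add_distrib]
  refine Finset.sum_congr rfl fun i _ => ?_
  by_cases hS : i ∈ S <;> by_cases hT : i ∈ T <;>
    simp [indVec, Real.zero_rpow hp0.ne', hS, hT]

/-- The number of measurements needed for sparse recovery by `ℓ^p` minimization. -/
lemma NullSpaceProperty.mul_log_le {N m s : ℕ} {p : ℝ} (hp0 : 0 < p) (hp1 : p ≤ 1) (hs : 0 < s)
    (hsN : s ≤ N) {A : (Fin N → ℝ) →ₗ[ℝ] (Fin m → ℝ)}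
    (h : NullSpaceProperty p (2 * s) (LinearMap.ker A)) :
    p * s * Real.log (N / (4 * s)) ≤ 2 * m * Real.log 3 := by
  obtain ⟨F, hFs, hFk, hcard⟩ := exists_finset_small_inter (α := Fin N) (s := s) (k := (s + 1) / 2)
    (by omega) (by simpa using hsN)
  rw [Fintype.card_fin] at hcard
  have hlow := half_mul_log_le_log_card hs hsN (by omega) hcard
  have hup := card_le_of_separated A.rangeRestrict A.surjective_rangeRestrict hp0 hp1 F indVec
    (r := s) (by exact_mod_cast hs) (fun S hS => by rw [powSum_indVec hp0, hFs S hS])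
    (fun S hS T hT hne v hv => by
      rw [LinearMap.ker_rangeRestrict] at hv
      refine le_trans ?_ (h.powSum_le hp0 hp1 (S := S ∪ T) ?_ ?_ hv)
      · rw [powSum_indVec_sub hp0]
        have h1 := hFk S hS T hT hne
        have h2 := Finset.card_sdiff_add_card_inter S T
        have h3 := Finset.card_sdiff_add_card_inter T S
        rw [Finset.inter_comm T S] at h3
        have := hFs S hS
        have := hFs T hT
        have h4 : s ≤ #(S \ T) + #(T \ S) := by omega
        exact_mod_cast h4
      · have := Finset.card_union_le S T
        rw [hFs S hS, hFs T hT] at this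
        omega
      · intro i hi
        rw [Finset.mem_union, not_or] at hi
        simp [indVec, hi.1, hi.2])
  have hrank : (Module.finrank ℝ (LinearMap.range A) : ℝ) ≤ m := by
    have := (LinearMap.range A).finrank_le
    rw [Module.finrank_fin_fun] at this
    exact_mod_cast this
  have hup' : Real.log #F ≤ m / p * Real.log 3 := by
    have hlog3 : 0 ≤ Real.log 3 := Real.log_nonneg (by norm_num)
    rcases Nat.eq_zero_or_pos #F with h0 | hpos
    · rw [h0, Nat.cast_zero, Real.log_zero]
      positivity
    · have := Real.log_le_log (by exact_mod_cast hpos) hup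
      rw [Real.log_rpow (by norm_num)] at this
      refine this.trans ?_
      gcongr
  have hfin := hlow.trans hup'
  rw [div_mul_eq_mul_div _ p, le_div_iff₀ hp0] at hfin
  linarith

lemma lt_toReal_of_ofReal_lt {p : ℝ} {q : ℝ≥0∞} (hp0 : 0 < p) (hpq : ENNReal.ofReal p < q)
    (hq : q ≠ ⊤) : p < q.toReal :=
  (ENNReal.ofReal_lt_iff_lt_toReal hp0.le hq).1 hpq

lemma wnorm_one_nonneg {N : ℕ} (q : ℝ≥0∞) (v : Fin N → ℝ) : 0 ≤ wnorm q (fun _ => 1) v := by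
  unfold wnorm
  split_ifs
  · exact Real.iSup_nonneg fun i => by positivity
  · positivity

lemma wnorm_one_smul {N : ℕ} {q : ℝ≥0∞} (hq : q ≠ 0) (c : ℝ) (v : Fin N → ℝ) :
    wnorm q (fun _ => 1) (c • v) = |c| * wnorm q (fun _ => 1) v := by
  unfold wnorm
  split_ifs with htop
  · simp [Real.mul_iSup_of_nonneg (abs_nonneg c), abs_mul]
  · have hqr : q.toReal ≠ 0 := (ENNReal.toReal_pos hq htop).ne'
    simp only [div_one]
    change (powSum q.toReal (c • v)) ^ _ = |c| * (powSum q.toReal v) ^ _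
    rw [powSum_smul, Real.mul_rpow (by positivity) (powSum_nonneg _ _),
      ← Real.rpow_mul (abs_nonneg c), mul_one_div_cancel hqr, Real.rpow_one]

lemma exists_wnorm_one_le {N : ℕ} (q : ℝ≥0∞) :
    ∃ C, ∀ v : Fin N → ℝ, (∀ i, |v i| ≤ 1) → wnorm q (fun _ => 1) v ≤ C := by
  unfold wnorm
  split_ifs
  · exact ⟨1, fun v hv => Real.iSup_le (fun i => by simpa using hv i) zero_le_one⟩
  · refine ⟨(∑ _i : Fin N, (1 : ℝ)) ^ (1 / q.toReal), fun v hv => ?_⟩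
    refine Real.rpow_le_rpow (by positivity) (Finset.sum_le_sum fun i _ => ?_) (by positivity)
    exact Real.rpow_le_one (by positivity) (by simpa using hv i) (by positivity)

/-- Comparison of `ℓ^p` and `ℓ^q` norms on few coordinates. -/
lemma sum_rpow_le_card_mul_wnorm {N : ℕ} {p : ℝ} {q : ℝ≥0∞} (hp0 : 0 < p)
    (hpq : ENNReal.ofReal p < q) (S : Finset (Fin N)) (v : Fin N → ℝ) :
    ∑ i ∈ S, |v i| ^ p ≤ (#S : ℝ) ^ (1 - p * q⁻¹.toReal) * wnorm q (fun _ => 1) v ^ p := by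
  by_cases hq : q = ⊤
  · subst hq
    simp only [wnorm, if_true, div_one, ENNReal.inv_top, ENNReal.toReal_zero, mul_zero, sub_zero,
      Real.rpow_one]
    rw [← nsmul_eq_mul]
    refine Finset.sum_le_card_nsmul _ _ _ fun i _ => ?_
    exact Real.rpow_le_rpow (abs_nonneg _)
      (le_ciSup (f := fun i => |v i|) (Set.finite_range _).bddAbove i) hp0.le
  · have hlt := lt_toReal_of_ofReal_lt hp0 hpq hq
    simp only [wnorm, if_neg hq, div_one, ENNReal.toReal_inv]
    set r := q.toReal with hr
    have hr0 : 0 < r := hp0.trans hlt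
    have hpm := Real.rpow_sum_le_const_mul_sum_rpow S (fun i => |v i| ^ p) (p := r / p)
      ((one_le_div hp0).2 hlt.le)
    have habs : ∀ i, |(|v i| ^ p)| = |v i| ^ p := fun i => abs_of_nonneg (by positivity)
    have hpow : ∀ i, (|v i| ^ p) ^ (r / p) = |v i| ^ r := fun i => by
      rw [← Real.rpow_mul (abs_nonneg _), mul_div_cancel₀ _ hp0.ne']
    simp only [habs, hpow] at hpm
    have hle : (∑ i ∈ S, |v i| ^ p) ^ (r / p) ≤ (#S : ℝ) ^ (r / p - 1) * ∑ i, |v i| ^ r :=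
      hpm.trans (by
        gcongr
        exact Finset.subset_univ S)
    have hfin := Real.rpow_le_rpow (by positivity) hle (z := p / r) (by positivity)
    rw [← Real.rpow_mul (by positivity), div_mul_div_cancel₀ hp0.ne', div_self hr0.ne',
      Real.rpow_one, Real.mul_rpow (by positivity) (by positivity),
      ← Real.rpow_mul (by positivity)] at hfin
    rw [← Real.rpow_mul (by positivity)]
    convert hfin using 3
    · field_simp
    · field_simp

lemma mul_inv_toReal_lt_one {p : ℝ} {q : ℝ≥0∞} (hp0 : 0 < p) (hpq : ENNReal.ofReal p < q) :
    p * q⁻¹.toReal < 1 := by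
  by_cases hq : q = ⊤
  · simp [hq]
  · have hlt := lt_toReal_of_ofReal_lt hp0 hpq hq
    rw [ENNReal.toReal_inv, ← div_eq_mul_inv, div_lt_one (hp0.trans hlt)]
    exact hlt

lemma nullSpaceProperty_of_wnorm_le {N t : ℕ} {p T : ℝ} {q : ℝ≥0∞} (hp0 : 0 < p)
    (hpq : ENNReal.ofReal p < q) (hT : 0 ≤ T) {K : Submodule ℝ (Fin N → ℝ)}
    (hK : ∀ v ∈ K, wnorm q (fun _ => 1) v ≤ T * powSum p v ^ (1 / p))
    (ht : (t : ℝ) ^ (1 - p * q⁻¹.toReal) * T ^ p < 1 / 2) :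
    NullSpaceProperty p t K := by
  intro v hv hv0 S hS
  have hpos := powSum_pos (p := p) hv0
  have hexp : 0 ≤ 1 - p * q⁻¹.toReal := (sub_pos.2 (mul_inv_toReal_lt_one hp0 hpq)).le
  calc ∑ i ∈ S, |v i| ^ p
      ≤ (#S : ℝ) ^ (1 - p * q⁻¹.toReal) * wnorm q (fun _ => 1) v ^ p :=
        sum_rpow_le_card_mul_wnorm hp0 hpq S v
    _ ≤ (t : ℝ) ^ (1 - p * q⁻¹.toReal) * (T * powSum p v ^ (1 / p)) ^ p := by
        gcongr
        · exact Real.rpow_nonneg (wnorm_one_nonneg q v) p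
        · exact wnorm_one_nonneg q v
        · exact hK v hv
    _ = (t : ℝ) ^ (1 - p * q⁻¹.toReal) * T ^ p * powSum p v := by
        rw [Real.mul_rpow hT (by positivity), ← Real.rpow_mul hpos.le,
          one_div_mul_cancel hp0.ne', Real.rpow_one, mul_assoc]
    _ < 1 / 2 * powSum p v := by gcongr
    _ = powSum p v / 2 := by ring

/-- The supremum of a norm over a section of the `ℓ^p` ball controls the norm on the subspace. -/
lemma wnorm_le_iSup_mul {N : ℕ} {p : ℝ} {q : ℝ≥0∞} (hp0 : 0 < p) (hq : q ≠ 0)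
    (K : Submodule ℝ (Fin N → ℝ)) {v : Fin N → ℝ} (hv : v ∈ K) :
    wnorm q (fun _ => 1) v ≤
      (⨆ x : ({x : Fin N → ℝ | (∑ i, |x i| ^ p) ^ (1 / p) ≤ 1} ∩ (K : Set (Fin N → ℝ)) :
        Set (Fin N → ℝ)), wnorm q (fun _ => 1) (x : Fin N → ℝ)) * powSum p v ^ (1 / p) := by
  rcases eq_or_ne v 0 with rfl | hv0
  · have h0 := wnorm_one_smul hq 0 (0 : Fin N → ℝ)
    rw [smul_zero, abs_zero, zero_mul] at h0
    rw [h0]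
    exact mul_nonneg (Real.iSup_nonneg fun x => wnorm_one_nonneg q _)
      (Real.rpow_nonneg (powSum_nonneg p _) _)
  have hpos : 0 < powSum p v ^ (1 / p) := Real.rpow_pos_of_pos (powSum_pos hv0) _
  have hmem : (powSum p v ^ (1 / p))⁻¹ • v ∈
      ({x : Fin N → ℝ | (∑ i, |x i| ^ p) ^ (1 / p) ≤ 1} ∩ (K : Set (Fin N → ℝ)) :
        Set (Fin N → ℝ)) := by
    refine ⟨?_, K.smul_mem _ hv⟩
    change powSum p _ ^ (1 / p) ≤ 1
    rw [powSum_smul, abs_of_pos (inv_pos.2 hpos), Real.inv_rpow hpos.le,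
      ← Real.rpow_mul (powSum_nonneg p v), one_div_mul_cancel hp0.ne', Real.rpow_one,
      inv_mul_cancel₀ (powSum_pos hv0).ne', Real.one_rpow]
  have hbdd : BddAbove (Set.range fun x : ({x : Fin N → ℝ | (∑ i, |x i| ^ p) ^ (1 / p) ≤ 1} ∩
      (K : Set (Fin N → ℝ)) : Set (Fin N → ℝ)) => wnorm q (fun _ => 1) (x : Fin N → ℝ)) := by
    obtain ⟨C, hC⟩ := exists_wnorm_one_le (N := N) q
    refine ⟨C, ?_⟩
    rintro _ ⟨⟨x, hx, -⟩, rfl⟩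
    exact hC x fun i => (abs_le_powSum_rpow hp0 x i).trans hx
  have h := le_ciSup hbdd ⟨_, hmem⟩
  simp only [wnorm_one_smul hq, abs_of_pos (inv_pos.2 hpos)] at h
  rwa [inv_mul_le_iff₀ hpos, mul_comm] at h

/-- A natural number `s` comparable to `1 / μ`. -/
lemma exists_nat_mul_le_one {μ : ℝ} (h0 : 0 < μ) (h1 : μ ≤ 1) :
    ∃ s : ℕ, 0 < s ∧ s * μ ≤ 1 ∧ 1 < 2 * s * μ := by
  have hone : 1 ≤ 1 / μ := (one_le_div h0).2 h1
  have hs : 0 < ⌊1 / μ⌋₊ := Nat.floor_pos.2 hone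
  refine ⟨⌊1 / μ⌋₊, hs, ?_, ?_⟩
  · exact (le_div_iff₀ h0).1 (Nat.floor_le (by positivity))
  · have h2 := Nat.lt_floor_add_one (1 / μ)
    have h3 : (1 : ℝ) ≤ ⌊1 / μ⌋₊ := by exact_mod_cast hs
    rw [← div_lt_iff₀ h0]
    linarith

lemma width_constant_rpow {p a μ T : ℝ} {s : ℕ} (hp0 : 0 < p) (ha : p * a < 1) (hμ : 0 < μ)
    (hs : s * μ ≤ 1) (hT0 : 0 ≤ T)
    (hT : T < (1 / 2 : ℝ) ^ (2 / p - a) * μ ^ (1 / p - a)) :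
    ((2 * s : ℕ) : ℝ) ^ (1 - p * a) * T ^ p < 1 / 2 := by
  rcases Nat.eq_zero_or_pos s with rfl | hs0
  · rw [mul_zero, Nat.cast_zero, Real.zero_rpow (by linarith)]
    norm_num
  have hsR : (0 : ℝ) < s := by exact_mod_cast hs0
  have hTp : T ^ p < (1 / 2 : ℝ) ^ (2 - p * a) * μ ^ (1 - p * a) := by
    have h := Real.rpow_lt_rpow hT0 hT hp0
    rw [Real.mul_rpow (by positivity) (by positivity), ← Real.rpow_mul (by norm_num),
      ← Real.rpow_mul hμ.le] at h
    convert h using 3 <;> field_simp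
  have hcast : ((2 * s : ℕ) : ℝ) = 2 * s := by push_cast; ring
  rw [hcast]
  calc (2 * s : ℝ) ^ (1 - p * a) * T ^ p
      < (2 * s : ℝ) ^ (1 - p * a) * ((1 / 2 : ℝ) ^ (2 - p * a) * μ ^ (1 - p * a)) := by gcongr
    _ = (2 : ℝ) ^ (1 - p * a) * (1 / 2 : ℝ) ^ (1 - p * a) * (1 / 2) * (s * μ) ^ (1 - p * a) := by
        rw [show 2 - p * a = (1 - p * a) + 1 by ring, Real.rpow_add_one (by norm_num),
          Real.mul_rpow (by norm_num) hsR.le, Real.mul_rpow hsR.le hμ.le]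
        ring
    _ = 1 / 2 * (s * μ) ^ (1 - p * a) := by
        rw [← Real.mul_rpow (by norm_num) (by norm_num)]
        norm_num
    _ ≤ 1 / 2 * 1 := by
        gcongr
        exact Real.rpow_le_one (by positivity) hs (by linarith)
    _ = 1 / 2 := mul_one _

/-- Incompatibility of the sparse-recovery bound with the choice of the sparsity. -/
lemma le_of_sparse_bounds {N m s : ℕ} {p : ℝ} (hp0 : 0 < p) (hp1 : p ≤ 1) (hs : 0 < s)
    (hm : 4 * s ≤ m) (hmN : m < N)
    (h : p * s * Real.log (N / (4 * s)) ≤ 2 * m * Real.log 3) :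
    2 * s * (2 * p / Real.log (3 ^ 8 * Real.exp 1) * Real.log (Real.exp 1 * N / m) / m) ≤ 1 := by
  have hsR : (0 : ℝ) < s := by exact_mod_cast hs
  have hmsR : (4 * s : ℝ) ≤ m := by exact_mod_cast hm
  have hmR : (0 : ℝ) < m := by linarith
  have hNR : (0 : ℝ) < N := by
    have : (m : ℝ) < N := by exact_mod_cast hmN
    linarith
  have hlog3 : 0 < Real.log 3 := Real.log_pos (by norm_num)
  have hD : Real.log (3 ^ 8 * Real.exp 1) = 8 * Real.log 3 + 1 := by
    rw [Real.log_mul (by norm_num) (Real.exp_pos 1).ne', Real.log_pow, Real.log_exp]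
    norm_num
  have hL : Real.log (Real.exp 1 * N / m) = 1 + Real.log (N / m) := by
    rw [mul_div_assoc, Real.log_mul (Real.exp_pos 1).ne' (by positivity), Real.log_exp]
  have hmono : Real.log (N / m) ≤ Real.log (N / (4 * s)) := by gcongr
  rw [hD, hL]
  have h1 : p * s * Real.log (N / m) ≤ 2 * m * Real.log 3 :=
    (mul_le_mul_of_nonneg_left hmono (by positivity)).trans h
  have h2 : p * s ≤ s := mul_le_of_le_one_left hsR.le hp1
  rw [show 2 * s * (2 * p / (8 * Real.log 3 + 1) * (1 + Real.log (N / m)) / m) =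
    4 * (p * s + p * s * Real.log (N / m)) / ((8 * Real.log 3 + 1) * m) by field_simp; ring,
    div_le_one (by positivity)]
  linarith

/-- Proposition B.1, lower bound for Gelfand widths of `ℓ^p` balls:
for `0 < p ≤ 1`, `p < q ≤ ∞` and `1 ≤ m < N`,
`d^m(B^p_N, ℓ^q_N) ≥ (1/2)^{2/p - 1/q} (min{1, (2p/log(3^8 e)) log(e N/m)/m})^{1/p - 1/q}`. -/
theorem statement3 {N m : ℕ} (hm1 : 1 ≤ m) (hmN : m < N)
    (p : ℝ) (hp0 : 0 < p) (hp1 : p ≤ 1)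
    (q : ℝ≥0∞) (hpq : ENNReal.ofReal p < q) :
    gelWidth m {x : Fin N → ℝ | (∑ i, |x i| ^ p) ^ (1 / p) ≤ 1} (wnorm q (fun _ => 1)) ≥
      (1 / 2 : ℝ) ^ (2 / p - q⁻¹.toReal) *
        (min 1 ((2 * p / Real.log (3 ^ 8 * Real.exp 1)) *
            Real.log (Real.exp 1 * N / m) / m)) ^ (1 / p - q⁻¹.toReal) := by
  refine le_csInf ⟨_, 0, rfl⟩ ?_
  rintro _ ⟨A, rfl⟩
  by_contra! hT
  have hq0 : q ≠ 0 := (bot_le.trans_lt hpq).ne'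
  have hmR : (0 : ℝ) < m := by exact_mod_cast hm1
  have hmNR : (m : ℝ) < N := by exact_mod_cast hmN
  have hlogN : 0 < Real.log (Real.exp 1 * N / m) := by
    rw [mul_div_assoc]
    refine Real.log_pos (one_lt_mul_of_lt_of_le ?_ ((one_le_div hmR).2 hmNR.le))
    exact Real.one_lt_exp_iff.2 one_pos
  have hlogD : 0 < Real.log (3 ^ 8 * Real.exp 1) :=
    Real.log_pos (one_lt_mul_of_lt_of_le (by norm_num) (Real.one_le_exp zero_le_one))
  set ν := (2 * p / Real.log (3 ^ 8 * Real.exp 1)) * Real.log (Real.exp 1 * N / m) / m with hν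
  have hν0 : 0 < ν := by positivity
  obtain ⟨s, hs, hsμ, hsμ'⟩ := exists_nat_mul_le_one (lt_min one_pos hν0) (min_le_left 1 ν)
  have hnsp : NullSpaceProperty p (2 * s) (LinearMap.ker A) :=
    nullSpaceProperty_of_wnorm_le hp0 hpq (Real.iSup_nonneg fun x => wnorm_one_nonneg q _)
      (fun v hv => wnorm_le_iSup_mul hp0 hq0 _ hv)
      (width_constant_rpow hp0 (mul_inv_toReal_lt_one hp0 hpq) (lt_min one_pos hν0) hsμ
        (Real.iSup_nonneg fun x => wnorm_one_nonneg q _) hT)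
  have hm4 := hnsp.two_mul_le hp0 hmN
  have hle := le_of_sparse_bounds hp0 hp1 hs (by omega) hmN
    (hnsp.mul_log_le hp0 hp1 hs (by omega))
  have : 2 * s * min 1 ν ≤ 2 * s * ν := by gcongr; exact min_le_right 1 ν
  exact absurd (hsμ'.trans_le (this.trans hle)) (lt_irrefl 1)

end
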